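/- arXiv:0911.0375 — 2 statements merged into one kernel-verified Lean document; each statement's English description precedes it below -/
import Mathlib

section
/- Let n ≥ 1 and let A be an n×n real symmetric matrix with tr A > 0 and σ₂(A) > 0, where σ₂(A) := ((tr A)² − tr(A²))/2. Then every eigenvalue λ of A satisfies |λ| < tr A; consequently both (tr A)·I − A and (tr A)·I + A are positive definite. -/
open Matrix

/-- The second elementary symmetric polynomial of the eigenvalues of a matrix,
expressed as `((tr M)² − tr(M²))/2`. -/
noncomputable def sigma2 {n : ℕ} (M : Matrix (Fin n) (Fin n) ℝ) : ℝ :=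
  ((M.trace) ^ 2 - (M * M).trace) / 2

/-!
The eigenvalues satisfy `∑ λᵢ² = tr (A²) = (tr A)² - 2 σ₂(A) < (tr A)²`, so no single `|λᵢ|` can
reach `tr A`. In an orthonormal eigenbasis `(tr A) • 1 ± A` is diagonal with entries `tr A ± λᵢ`.
-/

section Hermitian

open scoped ComplexOrder

variable {𝕜 ι : Type*} [RCLike 𝕜] [Fintype ι] [DecidableEq ι] {A : Matrix ι ι 𝕜}

theorem trace_pow_eq_sum_eigenvalues_pow (hA : A.IsHermitian) (k : ℕ) :
    (A ^ k).trace = ∑ i, (hA.eigenvalues i : 𝕜) ^ k := by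
  conv_lhs => rw [hA.spectral_theorem, ← map_pow, Unitary.conjStarAlgAut_apply, trace_mul_cycle,
    Unitary.coe_star_mul_self, one_mul, diagonal_pow, trace_diagonal]
  rfl

theorem smul_one_add_smul_eq_conjStarAlgAut_diagonal (hA : A.IsHermitian) (a b : ℝ) :
    a • (1 : Matrix ι ι 𝕜) + b • A = Unitary.conjStarAlgAut 𝕜 _ hA.eigenvectorUnitary
      (diagonal fun i => ((a + b * hA.eigenvalues i : ℝ) : 𝕜)) := by
  have diagonal_eq : (diagonal fun i => ((a + b * hA.eigenvalues i : ℝ) : 𝕜)) =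
      (a : 𝕜) • 1 + (b : 𝕜) • diagonal (RCLike.ofReal ∘ hA.eigenvalues) := by
    rw [smul_one_eq_diagonal, ← diagonal_smul, diagonal_add]
    simp
  rw [diagonal_eq, map_add, map_smul, map_smul, map_one, ← hA.spectral_theorem,
    RCLike.real_smul_eq_coe_smul (K := 𝕜) a, RCLike.real_smul_eq_coe_smul (K := 𝕜) b]

theorem posDef_smul_one_add_smul_iff (hA : A.IsHermitian) (a b : ℝ) :
    (a • (1 : Matrix ι ι 𝕜) + b • A).PosDef ↔ ∀ i, 0 < a + b * hA.eigenvalues i := by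
  rw [smul_one_add_smul_eq_conjStarAlgAut_diagonal hA, Unitary.conjStarAlgAut_apply,
    Unitary.isUnit_coe.posDef_star_right_conjugate_iff, posDef_diagonal_iff]
  simp only [RCLike.ofReal_pos]

theorem posDef_smul_one_add_iff (hA : A.IsHermitian) (t : ℝ) :
    (t • (1 : Matrix ι ι 𝕜) + A).PosDef ↔ ∀ i, -t < hA.eigenvalues i := by
  simpa only [one_smul, one_mul, neg_lt_iff_pos_add'] using posDef_smul_one_add_smul_iff hA t 1

theorem posDef_smul_one_sub_iff (hA : A.IsHermitian) (t : ℝ) :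
    (t • (1 : Matrix ι ι 𝕜) - A).PosDef ↔ ∀ i, hA.eigenvalues i < t := by
  simpa only [neg_one_smul, neg_one_mul, ← sub_eq_add_neg, sub_pos] using
    posDef_smul_one_add_smul_iff hA t (-1)

theorem eigenvalues_sq_le_re_trace_mul_self (hA : A.IsHermitian) (i : ι) :
    hA.eigenvalues i ^ 2 ≤ RCLike.re (A * A).trace := by
  have re_trace_eq : RCLike.re (A * A).trace = ∑ j, hA.eigenvalues j ^ 2 := by
    rw [← pow_two, trace_pow_eq_sum_eigenvalues_pow hA]
    exact_mod_cast RCLike.ofReal_re (K := 𝕜) _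
  rw [re_trace_eq]
  exact Finset.single_le_sum (fun j _ => sq_nonneg (hA.eigenvalues j)) (Finset.mem_univ i)

theorem newton_tensor_posDef_of_gamma2_general (hA : A.IsHermitian) {t : ℝ} (ht : 0 ≤ t)
    (hlt : RCLike.re (A * A).trace < t ^ 2) :
    (∀ i, |hA.eigenvalues i| < t) ∧
      (t • (1 : Matrix ι ι 𝕜) - A).PosDef ∧ (t • (1 : Matrix ι ι 𝕜) + A).PosDef := by
  have abs_eigenvalues_lt (i : ι) : |hA.eigenvalues i| < t :=
    abs_lt_of_sq_lt_sq ((eigenvalues_sq_le_re_trace_mul_self hA i).trans_lt hlt) ht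
  exact ⟨abs_eigenvalues_lt,
    (posDef_smul_one_sub_iff hA t).2 fun i => (abs_lt.1 (abs_eigenvalues_lt i)).2,
    (posDef_smul_one_add_iff hA t).2 fun i => (abs_lt.1 (abs_eigenvalues_lt i)).1⟩

end Hermitian

theorem sigma2_pos_iff {n : ℕ} (M : Matrix (Fin n) (Fin n) ℝ) :
    0 < sigma2 M ↔ (M * M).trace < M.trace ^ 2 := by
  rw [sigma2, div_pos_iff_of_pos_right two_pos, sub_pos]

/-- If `A` is an `n×n` real symmetric matrix with `tr A > 0` and `σ₂(A) > 0`,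
then every eigenvalue `λ` of `A` satisfies `|λ| < tr A`; consequently both
`(tr A)·I − A` and `(tr A)·I + A` are positive definite. This expresses the
ellipticity of the `σ₂`-equation at admissible solutions. -/
theorem newton_tensor_posDef_of_gamma2
    {n : ℕ} (hn : 1 ≤ n) (A : Matrix (Fin n) (Fin n) ℝ) (hA : A.IsHermitian)
    (htr : 0 < A.trace) (hs2 : 0 < sigma2 A) :
    (∀ i : Fin n, |hA.eigenvalues i| < A.trace) ∧
      (A.trace • (1 : Matrix (Fin n) (Fin n) ℝ) - A).PosDef ∧
      (A.trace • (1 : Matrix (Fin n) (Fin n) ℝ) + A).PosDef :=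
  newton_tensor_posDef_of_gamma2_general hA htr.le ((sigma2_pos_iff A).1 hs2)
end

section
/- There exists a constant C > 0 such that for every real t ≥ 1, ∫_{ℝ⁴} (2 t ‖z‖/(1 + t² ‖z‖²))³ · (2/(1+‖z‖²))⁴ dz ≤ C / t³. -/
open MeasureTheory

/-!
The dilated factor satisfies `2t‖z‖ / (1 + t²‖z‖²) ≤ 2 / (t‖z‖)`, so its `p`-th power contributes
`(2 / t) ^ p` against the weight `‖z‖⁻ᵖ`, which no longer depends on `t`. That weight is integrable
near the origin when `p` is below the dimension `n`, and the spherical density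
`(2 / (1 + ‖z‖²)) ^ m` makes it integrable at infinity when `n < p + 2m`. In the case of interest,
`n = 4`, `p = 3` and `m = 4`.
-/

-- At `x = 0` this holds because `2 / 0 = 0`.
lemma two_mul_div_one_add_sq_le_two_div {x : ℝ} (hx : 0 ≤ x) : 2 * x / (1 + x ^ 2) ≤ 2 / x := by
  rcases hx.eq_or_lt with rfl | hx
  · simp
  · rw [div_le_div_iff₀ (by positivity) hx]
    linarith

lemma pow_le_one_add_sq_pow {k m : ℕ} (hkm : k ≤ 2 * m) {x : ℝ} (hx : 0 ≤ x) :
    x ^ k ≤ (1 + x ^ 2) ^ m := by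
  have le_sqrt : x ≤ √(1 + x ^ 2) := Real.le_sqrt_of_sq_le (by linarith)
  have one_le_sqrt : 1 ≤ √(1 + x ^ 2) := Real.one_le_sqrt.2 (by linarith [sq_nonneg x])
  calc x ^ k ≤ √(1 + x ^ 2) ^ k := by gcongr
    _ ≤ √(1 + x ^ 2) ^ (2 * m) := pow_le_pow_right₀ one_le_sqrt hkm
    _ = (1 + x ^ 2) ^ m := by rw [pow_mul, Real.sq_sqrt (by positivity)]

lemma integrable_pow_mul_inv_one_add_sq_pow {k m : ℕ} (hkm : k + 2 ≤ 2 * m) :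
    Integrable fun x : ℝ ↦ x ^ k * ((1 + x ^ 2)⁻¹) ^ m := by
  obtain ⟨l, rfl⟩ : ∃ l, m = l + 1 := ⟨m - 1, by lia⟩
  refine integrable_inv_one_add_sq.mono' (by fun_prop) (.of_forall fun x ↦ ?_)
  have abs_pow_le : |x| ^ k ≤ (1 + x ^ 2) ^ l := by
    simpa only [sq_abs] using pow_le_one_add_sq_pow (by lia) (abs_nonneg x)
  calc ‖x ^ k * ((1 + x ^ 2)⁻¹) ^ (l + 1)‖
      = |x| ^ k * ((1 + x ^ 2)⁻¹) ^ (l + 1) := by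
        rw [norm_mul, norm_pow, Real.norm_eq_abs, Real.norm_of_nonneg (by positivity)]
    _ ≤ (1 + x ^ 2) ^ l * ((1 + x ^ 2)⁻¹) ^ (l + 1) := by gcongr
    _ = (1 + x ^ 2)⁻¹ := by
        rw [pow_succ _ l, ← mul_assoc, ← mul_pow, mul_inv_cancel₀ (by positivity), one_pow, one_mul]

lemma integrable_inv_norm_pow_mul_inv_one_add_norm_sq_pow {E : Type*} [NormedAddCommGroup E]
    [NormedSpace ℝ E] [FiniteDimensional ℝ E] [MeasurableSpace E] [BorelSpace E] (μ : Measure E)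
    [μ.IsAddHaarMeasure] {p m : ℕ} (hp : p < Module.finrank ℝ E)
    (hm : Module.finrank ℝ E < p + 2 * m) :
    Integrable (fun z : E ↦ ‖z‖⁻¹ ^ p * ((1 + ‖z‖ ^ 2)⁻¹) ^ m) μ := by
  have : Nontrivial E := Module.nontrivial_of_finrank_pos (R := ℝ) (by lia)
  obtain ⟨k, hk⟩ : ∃ k, Module.finrank ℝ E - 1 = k + p := ⟨Module.finrank ℝ E - 1 - p, by lia⟩
  rw [integrable_fun_norm_addHaar μ (f := fun r : ℝ ↦ r⁻¹ ^ p * ((1 + r ^ 2)⁻¹) ^ m), hk]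
  refine (integrable_pow_mul_inv_one_add_sq_pow (k := k) (m := m) (by lia)).integrableOn.congr_fun
    (fun r (hr : 0 < r) ↦ ?_) measurableSet_Ioi
  rw [smul_eq_mul, ← mul_assoc, pow_add, mul_assoc (r ^ k), ← mul_pow, mul_inv_cancel₀ hr.ne',
    one_pow, mul_one]

lemma integral_dilation_pow_mul_le {E : Type*} [SeminormedAddCommGroup E] [MeasurableSpace E]
    {μ : Measure E} {p : ℕ} {w : E → ℝ} (hw : ∀ z, 0 ≤ w z)
    (hint : Integrable (fun z ↦ ‖z‖⁻¹ ^ p * w z) μ) {t : ℝ} (ht : 0 < t) :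
    ∫ z, (2 * t * ‖z‖ / (1 + t ^ 2 * ‖z‖ ^ 2)) ^ p * w z ∂μ
      ≤ (2 / t) ^ p * ∫ z, ‖z‖⁻¹ ^ p * w z ∂μ := by
  have factor_le (z : E) : 2 * t * ‖z‖ / (1 + t ^ 2 * ‖z‖ ^ 2) ≤ 2 / t * ‖z‖⁻¹ := by
    simpa only [mul_pow, mul_assoc, div_mul_eq_div_div, div_eq_mul_inv (2 / t)] using
      two_mul_div_one_add_sq_le_two_div (x := t * ‖z‖) (by positivity)
  rw [← integral_const_mul]
  refine integral_mono_of_nonneg (.of_forall fun z ↦ mul_nonneg (by positivity) (hw z))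
    (hint.const_mul _) (.of_forall fun z ↦ ?_)
  calc (2 * t * ‖z‖ / (1 + t ^ 2 * ‖z‖ ^ 2)) ^ p * w z
      ≤ (2 / t * ‖z‖⁻¹) ^ p * w z :=
        mul_le_mul_of_nonneg_right (pow_le_pow_left₀ (by positivity) (factor_le z) p) (hw z)
    _ = (2 / t) ^ p * (‖z‖⁻¹ ^ p * w z) := by rw [mul_pow, mul_assoc]

theorem cubic_remainder_estimate_general {E : Type*} [NormedAddCommGroup E] [NormedSpace ℝ E]
    [FiniteDimensional ℝ E] [MeasurableSpace E] [BorelSpace E] (μ : Measure E)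
    [μ.IsAddHaarMeasure] {p m : ℕ} (hp : p < Module.finrank ℝ E)
    (hm : Module.finrank ℝ E < p + 2 * m) :
    ∃ C : ℝ, 0 < C ∧ ∀ t : ℝ, 0 < t →
      ∫ z, (2 * t * ‖z‖ / (1 + t ^ 2 * ‖z‖ ^ 2)) ^ p * (2 / (1 + ‖z‖ ^ 2)) ^ m ∂μ ≤ C / t ^ p := by
  have density_nonneg (z : E) : 0 ≤ (2 / (1 + ‖z‖ ^ 2)) ^ m := by positivity
  have weight_integrable : Integrable (fun z ↦ ‖z‖⁻¹ ^ p * (2 / (1 + ‖z‖ ^ 2)) ^ m) μ := by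
    simpa only [div_eq_mul_inv, mul_pow, mul_left_comm] using
      (integrable_inv_norm_pow_mul_inv_one_add_norm_sq_pow μ hp hm).const_mul (2 ^ m)
  set I := ∫ z, ‖z‖⁻¹ ^ p * (2 / (1 + ‖z‖ ^ 2)) ^ m ∂μ
  have : 0 ≤ I := integral_nonneg fun z ↦ by positivity
  refine ⟨2 ^ p * I + 1, by positivity, fun t ht ↦ ?_⟩
  calc ∫ z, (2 * t * ‖z‖ / (1 + t ^ 2 * ‖z‖ ^ 2)) ^ p * (2 / (1 + ‖z‖ ^ 2)) ^ m ∂μ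
      ≤ (2 / t) ^ p * I := integral_dilation_pow_mul_le density_nonneg weight_integrable ht
    _ = 2 ^ p * I / t ^ p := by rw [div_pow, div_mul_eq_mul_div]
    _ ≤ (2 ^ p * I + 1) / t ^ p := by gcongr; linarith

/-- Estimate (out3): there is `C > 0` such that for all `t ≥ 1`,
`∫_{ℝ⁴} (2t‖z‖/(1+t²‖z‖²))³ (2/(1+‖z‖²))⁴ dz ≤ C/t³`. -/
theorem cubic_remainder_estimate :
    ∃ C : ℝ, 0 < C ∧ ∀ t : ℝ, 1 ≤ t →
      (∫ z : EuclideanSpace ℝ (Fin 4),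
        (2 * t * ‖z‖ / (1 + t ^ 2 * ‖z‖ ^ 2)) ^ 3 * (2 / (1 + ‖z‖ ^ 2)) ^ 4)
        ≤ C / t ^ 3 := by
  obtain ⟨C, hC, hbound⟩ := cubic_remainder_estimate_general
    (volume : Measure (EuclideanSpace ℝ (Fin 4))) (p := 3) (m := 4) (by simp) (by simp)
  exact ⟨C, hC, fun t ht ↦ hbound t (by linarith)⟩
end
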